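/- Let G be a finite simple graph with adjacency matrix A (over the reals), and let χvec(G) be the vector chromatic number of G. If Z is a real symmetric matrix indexed by the vertices of G that is entrywise nonnegative and positive semidefinite, then ⟨J, Z⟩ ≤ χvec(G) · ⟨J − A, Z⟩. -/

import Mathlib

open Matrix Finset BigOperators

/-- The Frobenius (trace) inner product of two real matrices. -/
noncomputable def frob {n : ℕ} (M N : Matrix (Fin n) (Fin n) ℝ) : ℝ :=
  ∑ u, ∑ v, M u v * N u v

/-- The all-ones matrix. -/
noncomputable def matJ (n : ℕ) : Matrix (Fin n) (Fin n) ℝ :=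
  Matrix.of fun _ _ => (1 : ℝ)

/-- The vector chromatic number of `G`: the supremum of `⟨J, Z⟩` over all real symmetric,
entrywise nonnegative, positive semidefinite matrices `Z` with trace `1` whose entries vanish
on distinct non-adjacent pairs of vertices. -/
noncomputable def chiVec {n : ℕ} (G : SimpleGraph (Fin n)) [DecidableRel G.Adj] : ℝ :=
  sSup { x : ℝ | ∃ Z : Matrix (Fin n) (Fin n) ℝ,
    Z.IsSymm ∧ (∀ u v, 0 ≤ Z u v) ∧ Z.PosSemidef ∧ Z.trace = 1 ∧
    (∀ u v, u ≠ v → ¬ G.Adj u v → Z u v = 0) ∧ x = frob (matJ n) Z }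

/-- The adjacency matrix of a graph is hermitian (it is real symmetric). -/
theorem adjHerm {n : ℕ} (G : SimpleGraph (Fin n)) [DecidableRel G.Adj] :
    (G.adjMatrix ℝ).IsHermitian :=
  (Matrix.conjTranspose_eq_transpose_of_trivial _).trans G.isSymm_adjMatrix

/-- `s⁺`: the sum of the squares of the positive eigenvalues of the adjacency matrix,
counted with multiplicity. -/
noncomputable def sPlus {n : ℕ} (G : SimpleGraph (Fin n)) [DecidableRel G.Adj] : ℝ :=
  ∑ i, if 0 < (adjHerm G).eigenvalues i then ((adjHerm G).eigenvalues i) ^ 2 else 0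

/-- `s⁻`: the sum of the squares of the negative eigenvalues of the adjacency matrix,
counted with multiplicity. -/
noncomputable def sMinus {n : ℕ} (G : SimpleGraph (Fin n)) [DecidableRel G.Adj] : ℝ :=
  ∑ i, if (adjHerm G).eigenvalues i < 0 then ((adjHerm G).eigenvalues i) ^ 2 else 0

/-- `A⁺ = Σ_{θ>0} θ E_θ`: the positive part of the adjacency matrix, obtained from its
spectral decomposition. -/
noncomputable def Aplus {n : ℕ} (G : SimpleGraph (Fin n)) [DecidableRel G.Adj] :
    Matrix (Fin n) (Fin n) ℝ :=
  ((adjHerm G).eigenvectorUnitary : Matrix (Fin n) (Fin n) ℝ) *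
    diagonal (fun i => if 0 < (adjHerm G).eigenvalues i then (adjHerm G).eigenvalues i else 0) *
    star ((adjHerm G).eigenvectorUnitary : Matrix (Fin n) (Fin n) ℝ)

/-- `A⁻ = -Σ_{λ<0} λ E_λ`: the negative part of the adjacency matrix, obtained from its
spectral decomposition. -/
noncomputable def Aminus {n : ℕ} (G : SimpleGraph (Fin n)) [DecidableRel G.Adj] :
    Matrix (Fin n) (Fin n) ℝ :=
  ((adjHerm G).eigenvectorUnitary : Matrix (Fin n) (Fin n) ℝ) *
    diagonal (fun i => if (adjHerm G).eigenvalues i < 0 then -(adjHerm G).eigenvalues i else 0) *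
    star ((adjHerm G).eigenvectorUnitary : Matrix (Fin n) (Fin n) ℝ)

/-!
Add to `Z` the weighted Laplacian of its part supported on the non-adjacent pairs. This keeps `Z`
positive semidefinite, keeps the sum of its entries (Laplacians have zero row sums), and moves the
weight of every non-adjacent pair to the diagonal, so that the new matrix is supported on the
diagonal and the edges and has trace `⟨I + Ā, Z⟩ = ⟨J - A, Z⟩`, where `Ā` is the adjacency matrix
of the complement. Dividing by the trace gives a matrix feasible for `χvec(G)`, whose defining
supremum is finite because `2 Z u v ≤ Z u u + Z v v` bounds `⟨J, Z⟩` by `n · tr Z`.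
-/

section WeightedLaplacian

variable {V R : Type*} [Fintype V] [DecidableEq V]

/-- The Laplacian `D - N` of the weighted graph with weight matrix `N`, where `D` is the diagonal
matrix of the row sums of `N`. Loops cancel: the diagonal of `N` does not affect it. -/
def weightedLaplacian [AddCommGroup R] (N : Matrix V V R) : Matrix V V R :=
  diagonal (fun u => ∑ v, N u v) - N

theorem weightedLaplacian_apply_of_ne [AddCommGroup R] (N : Matrix V V R) {u v : V}
    (huv : u ≠ v) : weightedLaplacian N u v = -N u v := by
  simp [weightedLaplacian, huv]

theorem sum_weightedLaplacian_apply [AddCommGroup R] (N : Matrix V V R) (u : V) :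
    ∑ v, weightedLaplacian N u v = 0 := by
  simp [weightedLaplacian, diagonal_apply]

theorem trace_weightedLaplacian [AddCommGroup R] (N : Matrix V V R) :
    (weightedLaplacian N).trace = ∑ u, ∑ v, N u v - N.trace := by
  rw [weightedLaplacian, trace_sub, trace_diagonal]

theorem isSymm_weightedLaplacian [AddCommGroup R] {N : Matrix V V R} (hN : N.IsSymm) :
    (weightedLaplacian N).IsSymm :=
  (isSymm_diagonal _).sub hN

theorem dotProduct_weightedLaplacian_mulVec [CommRing R] (N : Matrix V V R) (x : V → R) :
    x ⬝ᵥ weightedLaplacian N *ᵥ x = ∑ u, ∑ v, N u v * (x u ^ 2 - x u * x v) := by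
  rw [weightedLaplacian, sub_mulVec, dotProduct_sub]
  simp only [dotProduct, mulVec_diagonal]
  simp only [mulVec, dotProduct, mul_sum, sum_mul, ← sum_sub_distrib]
  exact sum_congr rfl fun u _ => sum_congr rfl fun v _ => by ring

theorem two_mul_dotProduct_weightedLaplacian_mulVec [CommRing R] {N : Matrix V V R}
    (hN : N.IsSymm) (x : V → R) :
    2 * (x ⬝ᵥ weightedLaplacian N *ᵥ x) = ∑ u, ∑ v, N u v * (x u - x v) ^ 2 := by
  have swap : ∑ u, ∑ v, N u v * (x u ^ 2 - x u * x v) =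
      ∑ u, ∑ v, N u v * (x v ^ 2 - x v * x u) := by
    rw [sum_comm]
    simp only [hN.apply]
  rw [dotProduct_weightedLaplacian_mulVec, two_mul]
  nth_rw 2 [swap]
  simp only [← sum_add_distrib, ← mul_add]
  exact sum_congr rfl fun u _ => sum_congr rfl fun v _ => by ring

theorem posSemidef_weightedLaplacian [CommRing R] [LinearOrder R] [IsStrictOrderedRing R]
    [StarRing R] [TrivialStar R] {N : Matrix V V R} (hN : N.IsSymm) (hnn : ∀ u v, 0 ≤ N u v) :
    (weightedLaplacian N).PosSemidef := by
  refine .of_dotProduct_mulVec_nonneg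
    (isHermitian_iff_isSymm.2 (isSymm_weightedLaplacian hN)) fun x => ?_
  rw [star_trivial, ← mul_nonneg_iff_of_pos_left two_pos,
    two_mul_dotProduct_weightedLaplacian_mulVec hN]
  exact sum_nonneg fun u _ => sum_nonneg fun v _ => mul_nonneg (hnn u v) (sq_nonneg _)

end WeightedLaplacian

section PosSemidef

variable {V R : Type*} [CommRing R] [LinearOrder R] [IsStrictOrderedRing R] [StarRing R]
  [TrivialStar R] {Z : Matrix V V R}

theorem two_mul_apply_le_add_diag (hZ : Z.PosSemidef) (u v : V) :
    2 * Z u v ≤ Z u u + Z v v := by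
  have hsymm : Z v u = Z u v := (isHermitian_iff_isSymm.1 hZ.isHermitian).apply u v
  have hform : 0 ≤ ![1, -1] ⬝ᵥ Z.submatrix ![u, v] ![u, v] *ᵥ ![1, -1] := by
    simpa only [star_trivial] using (hZ.submatrix ![u, v]).dotProduct_mulVec_nonneg ![1, -1]
  have hvalue : ![1, -1] ⬝ᵥ Z.submatrix ![u, v] ![u, v] *ᵥ ![1, -1] =
      Z u u + Z v v - 2 * Z u v := by
    simp only [dotProduct, mulVec, Fin.sum_univ_two, submatrix_apply, cons_val_zero, cons_val_one,
      hsymm]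
    ring
  linarith

theorem sum_sum_le_card_mul_trace [Fintype V] (hZ : Z.PosSemidef) :
    ∑ u, ∑ v, Z u v ≤ Fintype.card V * Z.trace := by
  have hsum : ∑ u, ∑ v, 2 * Z u v ≤ ∑ u, ∑ v, (Z u u + Z v v) :=
    sum_le_sum fun u _ => sum_le_sum fun v _ => two_mul_apply_le_add_diag hZ u v
  simp only [sum_add_distrib, ← mul_sum, sum_const, card_univ, nsmul_eq_mul] at hsum
  simp only [trace, diag_apply]
  linarith

end PosSemidef

section FoldNonedges

variable {V R : Type*} [Fintype V] [DecidableEq V] [CommRing R] (G : SimpleGraph V)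
  [DecidableRel G.Adj]

/-- The matrix obtained from `Z` by moving the entries at distinct non-adjacent pairs of vertices
of `G` to the diagonal, within their row. Adding a Laplacian is what makes this operation preserve
positive semidefiniteness. -/
def foldNonedges (Z : Matrix V V R) : Matrix V V R :=
  Z + weightedLaplacian (Gᶜ.adjMatrix R ⊙ Z)

theorem foldNonedges_apply_of_adj (Z : Matrix V V R) {u v : V} (huv : G.Adj u v) :
    foldNonedges G Z u v = Z u v := by
  simp [foldNonedges, weightedLaplacian_apply_of_ne _ huv.ne, huv]

theorem foldNonedges_apply_of_not_adj (Z : Matrix V V R) {u v : V} (hne : u ≠ v)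
    (huv : ¬G.Adj u v) : foldNonedges G Z u v = 0 := by
  simp [foldNonedges, weightedLaplacian_apply_of_ne _ hne, hne, huv]

theorem sum_foldNonedges_apply (Z : Matrix V V R) (u : V) :
    ∑ v, foldNonedges G Z u v = ∑ v, Z u v := by
  simp only [foldNonedges, Matrix.add_apply, sum_add_distrib, sum_weightedLaplacian_apply, add_zero]

theorem trace_foldNonedges (Z : Matrix V V R) :
    (foldNonedges G Z).trace = Z.trace + ∑ u, ∑ v, (Gᶜ.adjMatrix R ⊙ Z) u v := by
  have htrace : (Gᶜ.adjMatrix R ⊙ Z).trace = 0 := by simp [trace]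
  rw [foldNonedges, trace_add, trace_weightedLaplacian, htrace, sub_zero]

variable [LinearOrder R] [IsStrictOrderedRing R] [StarRing R] [TrivialStar R] {Z : Matrix V V R}

theorem posSemidef_foldNonedges (hZ : Z.PosSemidef) (hnn : ∀ u v, 0 ≤ Z u v) :
    (foldNonedges G Z).PosSemidef := by
  refine hZ.add (posSemidef_weightedLaplacian ?_ fun u v => ?_)
  · rw [IsSymm, transpose_hadamard, SimpleGraph.transpose_adjMatrix,
      (isHermitian_iff_isSymm.1 hZ.isHermitian).eq]
  · rw [hadamard_apply, SimpleGraph.adjMatrix_apply]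
    exact mul_nonneg (by split_ifs <;> simp) (hnn u v)

theorem foldNonedges_apply_nonneg (hZ : Z.PosSemidef) (hnn : ∀ u v, 0 ≤ Z u v) (u v : V) :
    0 ≤ foldNonedges G Z u v := by
  obtain rfl | hne := eq_or_ne u v
  · exact (posSemidef_foldNonedges G hZ hnn).diag_nonneg
  by_cases huv : G.Adj u v
  · exact (foldNonedges_apply_of_adj G Z huv).symm ▸ hnn u v
  · exact (foldNonedges_apply_of_not_adj G Z hne huv).ge

end FoldNonedges

section ChiVec

variable {n : ℕ} (G : SimpleGraph (Fin n)) [DecidableRel G.Adj] (Z : Matrix (Fin n) (Fin n) ℝ)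

theorem frob_matJ : frob (matJ n) Z = ∑ u, ∑ v, Z u v := by
  simp [frob, matJ]

theorem matJ_sub_adjMatrix : matJ n - G.adjMatrix ℝ = 1 + Gᶜ.adjMatrix ℝ := by
  rw [sub_eq_iff_eq_add, add_right_comm, ← SimpleGraph.compl_adjMatrix_eq_adjMatrix_compl,
    SimpleGraph.one_add_adjMatrix_add_compl_adjMatrix_eq_of_one]
  rfl

theorem frob_matJ_sub_adjMatrix :
    frob (matJ n - G.adjMatrix ℝ) Z = (foldNonedges G Z).trace := by
  rw [matJ_sub_adjMatrix, trace_foldNonedges]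
  simp [frob, add_mul, sum_add_distrib, one_apply, trace]

variable {G Z}

theorem frob_matJ_le_chiVec (hnn : ∀ u v, 0 ≤ Z u v) (hZ : Z.PosSemidef) (htrace : Z.trace = 1)
    (hsupp : ∀ u v, u ≠ v → ¬G.Adj u v → Z u v = 0) : frob (matJ n) Z ≤ chiVec G := by
  refine le_csSup ⟨n, ?_⟩
    ⟨Z, isHermitian_iff_isSymm.1 hZ.isHermitian, hnn, hZ, htrace, hsupp, rfl⟩
  rintro _ ⟨Y, -, -, hY, hYtrace, -, rfl⟩
  simpa [frob_matJ, hYtrace] using sum_sum_le_card_mul_trace hY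

theorem frob_matJ_le_chiVec_mul_trace (hnn : ∀ u v, 0 ≤ Z u v) (hZ : Z.PosSemidef)
    (hsupp : ∀ u v, u ≠ v → ¬G.Adj u v → Z u v = 0) :
    frob (matJ n) Z ≤ chiVec G * Z.trace := by
  obtain hzero | hpos := hZ.trace_nonneg.eq_or_lt
  · obtain rfl : Z = 0 := hZ.trace_eq_zero_iff.1 hzero.symm
    simp [frob]
  have hinv : 0 ≤ Z.trace⁻¹ := inv_nonneg.2 hpos.le
  have hnormalized : frob (matJ n) (Z.trace⁻¹ • Z) ≤ chiVec G :=
    frob_matJ_le_chiVec (fun u v => mul_nonneg hinv (hnn u v)) (hZ.smul hinv)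
      (by rw [trace_smul, smul_eq_mul, inv_mul_cancel₀ hpos.ne'])
      (fun u v hne huv => by rw [Matrix.smul_apply, hsupp u v hne huv, smul_zero])
  have hscale : frob (matJ n) (Z.trace⁻¹ • Z) = Z.trace⁻¹ * frob (matJ n) Z := by
    simp only [frob_matJ, Matrix.smul_apply, smul_eq_mul, mul_sum]
  rwa [hscale, inv_mul_le_iff₀' hpos] at hnormalized

end ChiVec

/-- **Lemma 2**. If `Z` is a real symmetric matrix indexed by the vertices of `G` that is
entrywise nonnegative and positive semidefinite, then `⟨J, Z⟩ ≤ χvec(G) · ⟨J − A, Z⟩`. -/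
theorem frob_J_le_chiVec_mul_frob_J_sub_A {n : ℕ} (G : SimpleGraph (Fin n))
    [DecidableRel G.Adj] (Z : Matrix (Fin n) (Fin n) ℝ) (hsymm : Z.IsSymm)
    (hnn : ∀ u v, 0 ≤ Z u v) (hpsd : Z.PosSemidef) :
    frob (matJ n) Z ≤ chiVec G * frob (matJ n - G.adjMatrix ℝ) Z := by
  calc frob (matJ n) Z = frob (matJ n) (foldNonedges G Z) := by
        simp only [frob_matJ, sum_foldNonedges_apply]
    _ ≤ chiVec G * (foldNonedges G Z).trace :=
        frob_matJ_le_chiVec_mul_trace (foldNonedges_apply_nonneg G hpsd hnn)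
          (posSemidef_foldNonedges G hpsd hnn) fun _ _ => foldNonedges_apply_of_not_adj G Z
    _ = chiVec G * frob (matJ n - G.adjMatrix ℝ) Z := by rw [frob_matJ_sub_adjMatrix]
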